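/- Let G and H be finite simple graphs such that G is connected, H is nonempty, H has no isolated vertices, and |V(H)| ≤ |V(G)|. Then there exists an injective map φ : V(H) → V(G) such that the superposition F = G ⊕_φ H is edge 2-connected if and only if both of the following hold: (1) G is edge 2-connected, or G is not edge 2-connected and p(G) ≤ |V(H)|; and (2) it is not the case that G is isomorphic to a star K_{1,n} with n odd and H is a matching graph. -/

import Mathlib

open SimpleGraph

/-- The superposition `G ⊕_φ H` of `G` and `H` with respect to an injective map
`φ : V(H) ↪ V(G)`. -/
def superpose {α β : Type*} (G : SimpleGraph α) (H : SimpleGraph β) (φ : β ↪ α) :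
    SimpleGraph α :=
  G ⊔ SimpleGraph.map φ H

/-- A graph is edge 2-connected if it is connected and has no bridge. -/
def TwoEdgeConnected {α : Type*} (G : SimpleGraph α) : Prop :=
  G.Connected ∧ ∀ e : Sym2 α, ¬ G.IsBridge e

/-- The graph obtained from `G` by deleting all its bridges; its connected
components are the biconnected components of `G`. -/
def bicompGraph {α : Type*} (G : SimpleGraph α) : SimpleGraph α :=
  G.deleteEdges {e | G.IsBridge e}

/-- A biconnected component `C` of `G` is pendant if exactly one bridge of `G` has an
endpoint in `C`. -/
def IsPendant {α : Type*} (G : SimpleGraph α)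
    (C : (bicompGraph G).ConnectedComponent) : Prop :=
  ∃! e : Sym2 α, G.IsBridge e ∧ ∃ v ∈ C.supp, v ∈ e

/-- `p(G)`: the number of pendant biconnected components of `G`. -/
noncomputable def numPendant {α : Type*} (G : SimpleGraph α) : ℕ :=
  {C : (bicompGraph G).ConnectedComponent | IsPendant G C}.ncard

/-- A matching graph is a nonempty graph in which every vertex has exactly one
neighbour (a disjoint union of copies of `K₂`). -/
def IsMatchingGraph {β : Type*} (H : SimpleGraph β) : Prop :=
  Nonempty β ∧ ∀ x : β, ∃! y : β, H.Adj x y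

/-!
If a pendant component of `G` contains no vertex of `H`, then its bridge survives in `F`, so
`p(G) ≤ |V(H)|` is necessary. Conversely, any two sides of bridges are nested or disjoint up to
complements, and a minimal side is a pendant component. Hence a set `S` with one vertex in each
pendant component meets every side of every bridge. Choose a star forest `K ⊆ H` with `p(G)`
non-isolated vertices and place these on `S`. If no edge of `K` crosses a bridge of `G`, then `K`
has an edge on either side of it, and exchanging a leaf of one with a leaf of the other makes both
cross; since sides are nested, no bridge that was crossed before ceases to be crossed. When no
further exchange is possible, every bridge is crossed and `F` has no bridge.

An edge of `K` placed on a bridge itself would be useless, which is no danger as long as `S` spans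
no bridge; it can only span one if `G = K₂`. Such a `K` exists unless `p(G)` is odd and a minimal
subgraph of `H` with at least `p(G)` non-isolated vertices is a matching on `p(G) + 1` of them. Then
`S` is enlarged by a vertex that is matched with a vertex of `S` along a pair that is not a bridge.
If there is no such pair, `G` is a star with leaf set `S`, and `H` is a matching on `|V(G)|`
vertices.
-/

/-- One side of a bridge: `A` is left by exactly one edge of `G`, namely the edge `uv` directed
from `u ∈ A` to `v ∉ A`. All arguments about bridges are carried out with such sides. -/
structure IsBridgeCut {α : Type*} (G : SimpleGraph α) (A : Set α) (u v : α) : Prop where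
  mem : u ∈ A
  notMem : v ∉ A
  adj : G.Adj u v
  eq_of_adj : ∀ a ∈ A, ∀ b ∉ A, G.Adj a b → a = u ∧ b = v

section BridgeCut

variable {α : Type*} {G : SimpleGraph α} {A D : Set α} {u v w z : α}

lemma exists_adj_of_reachable_of_mem_of_notMem {a b : α} (h : G.Reachable a b) (ha : a ∈ A)
    (hb : b ∉ A) : ∃ x ∈ A, ∃ y ∉ A, G.Adj x y := by
  obtain ⟨p⟩ := h
  obtain ⟨d, -, hfst, hsnd⟩ := p.exists_boundary_dart A ha hb
  exact ⟨d.fst, hfst, d.snd, hsnd, d.adj⟩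

lemma adj_of_isBridge (hG : G.Connected) (h : G.IsBridge s(u, v)) : G.Adj u v :=
  h.reachable_iff_adj.1 (hG.preconnected u v)

lemma IsBridgeCut.compl (h : IsBridgeCut G A u v) : IsBridgeCut G Aᶜ v u where
  mem := h.notMem
  notMem := not_not_intro h.mem
  adj := h.adj.symm
  eq_of_adj a ha b hb hab := (h.eq_of_adj b (not_not.1 hb) a ha hab.symm).symm

lemma IsBridgeCut.isBridge (h : IsBridgeCut G A u v) : G.IsBridge s(u, v) := by
  rw [isBridge_iff]
  intro hr
  obtain ⟨x, hx, y, hy, hxy⟩ := exists_adj_of_reachable_of_mem_of_notMem hr h.mem h.notMem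
  rw [deleteEdges_adj] at hxy
  obtain ⟨rfl, rfl⟩ := h.eq_of_adj x hx y hy hxy.1
  exact hxy.2 rfl

lemma exists_isBridgeCut_of_isBridge (hG : G.Connected) (h : G.IsBridge s(u, v)) :
    ∃ A, IsBridgeCut G A u v := by
  refine ⟨{w | (G.deleteEdges {s(u, v)}).Reachable u w}, Reachable.refl u, isBridge_iff.1 h,
    adj_of_isBridge hG h, fun a ha b hb hab ↦ ?_⟩
  have he : s(a, b) = s(u, v) := by
    by_contra he
    exact hb (Reachable.trans ha (deleteEdges_adj.2 ⟨hab, he⟩).reachable)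
  rcases Sym2.eq_iff.1 he with h' | ⟨rfl, -⟩
  · exact h'
  · exact absurd ha (isBridge_iff.1 h)

lemma IsBridgeCut.eq_of_isBridge (hA : IsBridgeCut G A u v) (hG : G.Connected) {a b : α}
    (ha : a ∈ A) (hb : b ∉ A) (h : G.IsBridge s(a, b)) : a = u ∧ b = v :=
  hA.eq_of_adj a ha b hb (adj_of_isBridge hG h)

lemma twoEdgeConnected_iff_forall_not_isBridgeCut (hG : G.Connected) :
    TwoEdgeConnected G ↔ ∀ A u v, ¬ IsBridgeCut G A u v := by
  refine ⟨fun h A u v hA ↦ h.2 _ hA.isBridge, fun h ↦ ⟨hG, fun e he ↦ ?_⟩⟩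
  induction e with | _ u v =>
  obtain ⟨A, hA⟩ := exists_isBridgeCut_of_isBridge hG he
  exact h A u v hA

lemma IsBridgeCut.exists_adj_inter_diff (hA : IsBridgeCut G A u v) (hG : G.Connected) {p q : α}
    (hp : p ∈ A ∩ D) (hq : q ∈ A \ D) : ∃ x ∈ A ∩ D, ∃ y ∈ A \ D, G.Adj x y := by
  wlog hu : u ∉ D generalizing D p q
  · obtain ⟨y, hy, x, hx, hyx⟩ := this (D := Dᶜ) hq ⟨hp.1, not_not_intro hp.2⟩ hu
    exact ⟨x, ⟨hx.1, not_not.1 hx.2⟩, y, hy, hyx.symm⟩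
  obtain ⟨x, hx, y, hy, hxy⟩ := exists_adj_of_reachable_of_mem_of_notMem (A := A ∩ D)
    (hG.preconnected p q) hp (fun h ↦ hq.2 h.2)
  have hyA : y ∈ A := by
    by_contra hyA
    exact hu ((hA.eq_of_adj x hx.1 y hyA hxy).1 ▸ hx.2)
  exact ⟨x, hx, y, ⟨hyA, fun h ↦ hy ⟨hyA, h⟩⟩, hxy⟩

lemma IsBridgeCut.mem_of_mem_inter_of_mem_diff (hA : IsBridgeCut G A u v)
    (hD : IsBridgeCut G D w z) (hG : G.Connected) {p q : α} (hp : p ∈ A ∩ D) (hq : q ∈ A \ D) :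
    w ∈ A := by
  obtain ⟨x, hx, y, hy, hxy⟩ := hA.exists_adj_inter_diff hG hp hq
  exact (hD.eq_of_adj x hx.2 y hy.2 hxy).1 ▸ hx.1

/- If all four quadrants of `A` and `D` were inhabited, then `A` and `Aᶜ`, being connected, would
both contain the bridge of `D`. -/
lemma IsBridgeCut.subset_or_disjoint_or (hA : IsBridgeCut G A u v) (hD : IsBridgeCut G D w z)
    (hG : G.Connected) : A ⊆ D ∨ Disjoint A D ∨ D ⊆ A ∨ Aᶜ ⊆ D := by
  by_contra! h
  obtain ⟨hAD, hdisj, hDA, hcompl⟩ := h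
  obtain ⟨q, hq⟩ := Set.not_subset.1 hAD
  obtain ⟨p, hp⟩ := Set.not_disjoint_iff.1 hdisj
  obtain ⟨r, hrD, hrA⟩ := Set.not_subset.1 hDA
  obtain ⟨s, hs⟩ := Set.not_subset.1 hcompl
  exact hA.compl.mem_of_mem_inter_of_mem_diff hD hG ⟨hrA, hrD⟩ hs
    (hA.mem_of_mem_inter_of_mem_diff hD hG hp hq)

end BridgeCut

section Pendant

variable {α : Type*} {G : SimpleGraph α} {A : Set α} {u v : α}

lemma bicompGraph_adj {a b : α} :
    (bicompGraph G).Adj a b ↔ G.Adj a b ∧ ¬ G.IsBridge s(a, b) :=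
  deleteEdges_adj

lemma not_reachable_bicompGraph_of_isBridge {a b : α} (h : G.IsBridge s(a, b)) :
    ¬ (bicompGraph G).Reachable a b := by
  have hmem : s(a, b) ∈ {e | G.IsBridge e} := h
  intro hr
  exact isBridge_iff.1 h (hr.mono (deleteEdges_anti (Set.singleton_subset_iff.2 hmem)))

lemma IsBridgeCut.mem_of_reachable_bicompGraph (hA : IsBridgeCut G A u v) {a b : α}
    (hr : (bicompGraph G).Reachable a b) (ha : a ∈ A) : b ∈ A := by
  by_contra hb
  obtain ⟨x, hx, y, hy, hxy⟩ := exists_adj_of_reachable_of_mem_of_notMem hr ha hb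
  rw [bicompGraph_adj] at hxy
  obtain ⟨rfl, rfl⟩ := hA.eq_of_adj x hx y hy hxy.1
  exact hxy.2 hA.isBridge

lemma IsPendant.exists_isBridgeCut (hG : G.Connected)
    {C : (bicompGraph G).ConnectedComponent} (hC : IsPendant G C) :
    ∃ u v, IsBridgeCut G C.supp u v := by
  obtain ⟨e, ⟨he, u, hu, hue⟩, hunique⟩ := hC
  obtain ⟨v, rfl⟩ := Sym2.mem_iff_exists.1 hue
  have hv : v ∉ C.supp := fun hv ↦
    not_reachable_bicompGraph_of_isBridge he (C.reachable_of_mem_supp hu hv)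
  refine ⟨u, v, hu, hv, adj_of_isBridge hG he, fun a ha b hb hab ↦ ?_⟩
  have hbridge : G.IsBridge s(a, b) := by
    by_contra hn
    exact hb (C.mem_supp_of_adj_mem_supp ha (bicompGraph_adj.2 ⟨hab, hn⟩))
  rcases Sym2.eq_iff.1 (hunique _ ⟨hbridge, a, ha, Sym2.mem_mk_left a b⟩) with h | ⟨rfl, -⟩
  · exact h
  · exact absurd ha hv

lemma IsBridgeCut.eq_of_isBridge_of_minimal (hG : G.Connected)
    (hA : Minimal (fun A ↦ ∃ u v, IsBridgeCut G A u v) A) (huv : IsBridgeCut G A u v) {a b : α}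
    (ha : a ∈ A) (h : G.IsBridge s(a, b)) : s(a, b) = s(u, v) := by
  obtain ⟨D, hD⟩ := exists_isBridgeCut_of_isBridge hG h
  by_cases hb : b ∈ A
  · exfalso
    rcases huv.subset_or_disjoint_or hD hG with hAD | hdisj | hDA | hcompl
    · exact hD.notMem (hAD hb)
    · exact Set.disjoint_left.1 hdisj ha hD.mem
    · exact hD.notMem (hA.le_of_le ⟨a, b, hD⟩ hDA hb)
    · exact hA.le_of_le ⟨b, a, hD.compl⟩ (Set.compl_subset_comm.1 hcompl) ha hD.mem
  · obtain ⟨rfl, rfl⟩ := huv.eq_of_isBridge hG ha hb h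
    rfl

lemma IsBridgeCut.exists_isPendant_supp_subset [Finite α] (hG : G.Connected)
    (hA : IsBridgeCut G A u v) :
    ∃ C : (bicompGraph G).ConnectedComponent, IsPendant G C ∧ C.supp ⊆ A := by
  obtain ⟨B, hBA, hB⟩ := exists_minimal_le_of_wellFoundedLT
    (fun A ↦ ∃ u v, IsBridgeCut G A u v) A ⟨u, v, hA⟩
  obtain ⟨a, b, hab⟩ := hB.prop
  set C := (bicompGraph G).connectedComponentMk a
  have haC : a ∈ C.supp := ConnectedComponent.connectedComponentMk_mem
  have hCB : C.supp ⊆ B := fun x hx ↦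
    hab.mem_of_reachable_bicompGraph (C.reachable_of_mem_supp haC hx) hab.mem
  refine ⟨C, ⟨s(a, b), ⟨hab.isBridge, a, haC, Sym2.mem_mk_left a b⟩, ?_⟩, hCB.trans hBA⟩
  rintro e ⟨he, x, hx, hxe⟩
  obtain ⟨y, rfl⟩ := Sym2.mem_iff_exists.1 hxe
  exact IsBridgeCut.eq_of_isBridge_of_minimal hG hB hab (hCB hx) he

lemma IsBridgeCut.eq_or_eq_of_singleton (hG : G.Connected) {s t : α}
    (hs : IsBridgeCut G {s} s t) (ht : IsBridgeCut G {t} t s) (w : α) : w = s ∨ w = t := by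
  by_contra hw
  obtain ⟨x, hx, y, hy, hxy⟩ := exists_adj_of_reachable_of_mem_of_notMem (A := {s, t})
    (hG.preconnected s w) (Set.mem_insert s {t}) hw
  rcases hx with rfl | rfl
  · exact hy (Or.inr (hs.eq_of_adj x rfl y (fun h ↦ hy (Or.inl h)) hxy).2)
  · exact hy (Or.inl (ht.eq_of_adj x rfl y (fun h ↦ hy (Or.inr h)) hxy).2)

lemma exists_mem_imp_eq_singleton (hu : u ∈ A) : ∃ s ∈ A, s = u → A = {s} := by
  by_cases h : ∃ s ∈ A, s ≠ u
  · obtain ⟨s, hs, hsu⟩ := h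
    exact ⟨s, hs, fun h ↦ absurd h hsu⟩
  · push Not at h
    exact ⟨u, hu, fun _ ↦ Set.eq_singleton_iff_unique_mem.2 ⟨hu, h⟩⟩

end Pendant

section Transversal

variable {α : Type*} {G : SimpleGraph α} {S : Set α}

/-- `S` meets both sides of every bridge of `G`. The images of the vertices of `H` have to form
such a set for the superposition to be bridgeless. -/
def MeetsBridgeSides (G : SimpleGraph α) (S : Set α) : Prop :=
  ∀ A u v, IsBridgeCut G A u v → ∃ s ∈ S, s ∈ A

/-- No bridge of `G` joins two vertices of `S`. -/
def BridgeIndependent (G : SimpleGraph α) (S : Set α) : Prop :=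
  ∀ s ∈ S, ∀ t ∈ S, ¬ G.IsBridge s(s, t)

/- One vertex is chosen in each pendant component, avoiding the end of its bridge if possible. -/
lemma exists_meetsBridgeSides_ncard_eq_numPendant [Finite α] (hG : G.Connected) :
    ∃ S, S.ncard = numPendant G ∧ MeetsBridgeSides G S ∧
      ∀ s ∈ S, ∀ t ∈ S, G.IsBridge s(s, t) → ∀ w, w = s ∨ w = t := by
  have hα : Nonempty α := hG.nonempty
  have hrep (C : (bicompGraph G).ConnectedComponent) (hC : IsPendant G C) :
      ∃ s u v, s ∈ C.supp ∧ IsBridgeCut G C.supp u v ∧ (s = u → C.supp = {s}) := by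
    obtain ⟨u, v, hcut⟩ := hC.exists_isBridgeCut hG
    obtain ⟨s, hs, hsu⟩ := exists_mem_imp_eq_singleton hcut.mem
    exact ⟨s, u, v, hs, hcut, hsu⟩
  choose! r u v hr hcut hru using hrep
  refine ⟨r '' {C | IsPendant G C}, Set.InjOn.ncard_image ?_, ?_, ?_⟩
  · exact fun C hC C' hC' h ↦ ConnectedComponent.eq_of_common_vertex (hr C hC) (h ▸ hr C' hC')
  · intro A a b hA
    obtain ⟨C, hC, hCA⟩ := hA.exists_isPendant_supp_subset hG
    exact ⟨r C, Set.mem_image_of_mem r hC, hCA (hr C hC)⟩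
  · have hsingleton (C C') (hC : IsPendant G C)
        (h : G.IsBridge s(r C, r C')) : IsBridgeCut G {r C} (r C) (r C') := by
      have hne : r C' ∉ C.supp := fun hmem ↦
        not_reachable_bicompGraph_of_isBridge h (C.reachable_of_mem_supp (hr C hC) hmem)
      obtain ⟨hu, hv⟩ := (hcut C hC).eq_of_isBridge hG (hr C hC) hne h
      have hcutC := hcut C hC
      rwa [hru C hC hu, ← hu, ← hv] at hcutC
    rintro _ ⟨C, hC, rfl⟩ _ ⟨C', hC', rfl⟩ h
    exact (hsingleton C C' hC h).eq_or_eq_of_singleton hG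
      (hsingleton C' C hC' (Sym2.eq_swap ▸ h))

end Transversal

section Superpose

variable {α β : Type*} {G : SimpleGraph α} {H : SimpleGraph β} {φ : β ↪ α}

lemma superpose_adj {a b : α} :
    (superpose G H φ).Adj a b ↔ G.Adj a b ∨ ∃ x y, H.Adj x y ∧ φ x = a ∧ φ y = b := by
  simp [superpose, SimpleGraph.map_adj]

lemma isBridgeCut_superpose_iff (hG : G.Connected) {A : Set α} {u v : α} :
    IsBridgeCut (superpose G H φ) A u v ↔ IsBridgeCut G A u v ∧
      ∀ x y, H.Adj x y → φ x ∈ A → φ y ∉ A → φ x = u ∧ φ y = v := by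
  constructor
  · intro h
    have heq (a) (ha : a ∈ A) (b) (hb : b ∉ A) (hab : G.Adj a b) : a = u ∧ b = v :=
      h.eq_of_adj a ha b hb (superpose_adj.2 (Or.inl hab))
    obtain ⟨a, ha, b, hb, hab⟩ :=
      exists_adj_of_reachable_of_mem_of_notMem (hG.preconnected u v) h.mem h.notMem
    obtain ⟨rfl, rfl⟩ := heq a ha b hb hab
    exact ⟨⟨ha, hb, hab, heq⟩, fun x y hxy hx hy ↦
      h.eq_of_adj _ hx _ hy (superpose_adj.2 (Or.inr ⟨x, y, hxy, rfl, rfl⟩))⟩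
  · rintro ⟨h, hH⟩
    refine ⟨h.mem, h.notMem, superpose_adj.2 (Or.inl h.adj), fun a ha b hb hab ↦ ?_⟩
    rcases superpose_adj.1 hab with hab | ⟨x, y, hxy, rfl, rfl⟩
    · exact h.eq_of_adj a ha b hb hab
    · exact hH x y hxy ha hb

lemma twoEdgeConnected_superpose_iff (hG : G.Connected) :
    TwoEdgeConnected (superpose G H φ) ↔ ∀ A u v, IsBridgeCut G A u v →
      ∃ x y, H.Adj x y ∧ φ x ∈ A ∧ φ y ∉ A ∧ ¬ (φ x = u ∧ φ y = v) := by
  have hF : (superpose G H φ).Connected := hG.mono le_sup_left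
  simp only [twoEdgeConnected_iff_forall_not_isBridgeCut hF, isBridgeCut_superpose_iff hG,
    not_and, not_forall, exists_prop]

lemma numPendant_le_card_of_twoEdgeConnected_superpose [Fintype β] (hG : G.Connected)
    (hF : TwoEdgeConnected (superpose G H φ)) : numPendant G ≤ Fintype.card β := by
  have hsub : {C | IsPendant G C} ⊆ Set.range ((bicompGraph G).connectedComponentMk ∘ φ) := by
    intro C hC
    obtain ⟨u, v, hcut⟩ := IsPendant.exists_isBridgeCut hG hC
    obtain ⟨x, -, -, hx, -⟩ := (twoEdgeConnected_superpose_iff hG).1 hF _ u v hcut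
    exact ⟨x, hx⟩
  calc numPendant G
      ≤ (Set.range ((bicompGraph G).connectedComponentMk ∘ φ)).ncard :=
        Set.ncard_le_ncard hsub (Set.toFinite _)
    _ ≤ Fintype.card β := by
        rw [← Set.image_univ, Fintype.card_eq_nat_card, ← Set.ncard_univ]
        exact Set.ncard_image_le Set.finite_univ

end Superpose

section Exchange

variable {α β : Type*} {G : SimpleGraph α} {K : SimpleGraph β} {A D : Set α}

/-- `ab` is an edge of `K` whose end `b` is a leaf. -/
def IsLeafEdge (K : SimpleGraph β) (a b : β) : Prop :=
  K.Adj a b ∧ ∀ z, K.Adj b z → z = a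

/-- `K` is a star forest: every edge has a leaf as one of its ends. -/
def IsStarForest (K : SimpleGraph β) : Prop :=
  ∀ x y, K.Adj x y → IsLeafEdge K x y ∨ IsLeafEdge K y x

/-- Every vertex of `K` has at most one neighbour. In contrast to `IsMatchingGraph`, vertices
without a neighbour are allowed, so that `K` can be a spanning subgraph of `H`. -/
def IsPartialMatching (K : SimpleGraph β) : Prop :=
  ∀ x y z, K.Adj x y → K.Adj x z → y = z

lemma IsPartialMatching.isLeafEdge (hK : IsPartialMatching K) {a b : β} (h : K.Adj a b) :
    IsLeafEdge K a b :=
  ⟨h, fun z hz ↦ hK b z a hz h.symm⟩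

lemma IsPartialMatching.isStarForest (hK : IsPartialMatching K) : IsStarForest K :=
  fun _ _ h ↦ Or.inl (hK.isLeafEdge h)

/-- Under the placement `φ`, some edge of `K` joins `D` to its complement. -/
def Crosses (K : SimpleGraph β) (φ : β → α) (D : Set α) : Prop :=
  ∃ x y, K.Adj x y ∧ φ x ∈ D ∧ φ y ∉ D

/-- The placement `φ` puts no edge of `K` on a bridge of `G`. -/
def AvoidsBridges (G : SimpleGraph α) (K : SimpleGraph β) (φ : β → α) : Prop :=
  ∀ x y, K.Adj x y → ¬ G.IsBridge s(φ x, φ y)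

lemma not_crosses_iff {φ : β → α} :
    ¬ Crosses K φ D ↔ ∀ x y, K.Adj x y → (φ x ∈ D ↔ φ y ∈ D) := by
  simp only [Crosses, not_exists, not_and, not_not]
  exact ⟨fun h x y hxy ↦ ⟨h x y hxy, h y x hxy.symm⟩, fun h x y hxy ↦ (h x y hxy).1⟩

/-- The placement obtained from `φ` by exchanging the images of `a` and `b`. -/
noncomputable def exchange (φ : β ↪ α) (a b : β) : β ↪ α :=
  open Classical in (Equiv.swap a b).toEmbedding.trans φ

lemma exchange_apply_left (φ : β ↪ α) (a b : β) : exchange φ a b a = φ b := by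
  simp [exchange]

lemma exchange_apply_right (φ : β ↪ α) (a b : β) : exchange φ a b b = φ a := by
  simp [exchange]

lemma exchange_apply_of_ne (φ : β ↪ α) {a b x : β} (ha : x ≠ a) (hb : x ≠ b) :
    exchange φ a b x = φ x := by
  classical
  simp [exchange, Equiv.swap_apply_of_ne_of_ne ha hb]

lemma exchange_exchange (φ : β ↪ α) (a b : β) : exchange (exchange φ a b) a b = φ := by
  ext x
  simp [exchange]

lemma exchange_image (φ : β ↪ α) {a b : β} {T : Set β} (ha : a ∈ T) (hb : b ∈ T) :
    exchange φ a b '' T = φ '' T := by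
  classical
  calc exchange φ a b '' T = φ '' (Equiv.swap a b '' T) := by
        rw [Set.image_image]
        rfl
    _ = φ '' T := by rw [(Equiv.bijOn_swap ha hb).image_eq]

lemma forall_adj_exchange {φ : β ↪ α} {R : α → α → Prop} (hR : ∀ p q, R p q → R q p)
    {a₁ a₂ b₁ b₂ : β} (ha : IsLeafEdge K a₁ a₂) (hb : IsLeafEdge K b₁ b₂) (hab : a₁ ≠ b₂)
    (hba : b₁ ≠ a₂) (h : ∀ x y, K.Adj x y → R (φ x) (φ y)) (hRab : R (φ a₁) (φ b₂))
    (hRba : R (φ b₁) (φ a₂)) (x y : β) (hxy : K.Adj x y) :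
    R (exchange φ a₂ b₂ x) (exchange φ a₂ b₂ y) := by
  have hleaf (z w) (hzw : K.Adj z w) (hz : z = a₂ ∨ z = b₂) :
      R (exchange φ a₂ b₂ w) (exchange φ a₂ b₂ z) := by
    rcases hz with rfl | rfl
    · rwa [ha.2 w hzw, exchange_apply_of_ne φ ha.1.ne hab, exchange_apply_left]
    · rwa [hb.2 w hzw, exchange_apply_of_ne φ hba hb.1.ne, exchange_apply_right]
  by_cases hx : x = a₂ ∨ x = b₂
  · exact hR _ _ (hleaf x y hxy hx)
  by_cases hy : y = a₂ ∨ y = b₂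
  · exact hleaf y x hxy.symm hy
  push Not at hx hy
  rw [exchange_apply_of_ne φ hx.1 hx.2, exchange_apply_of_ne φ hy.1 hy.2]
  exact h x y hxy

lemma AvoidsBridges.exchange {φ : β ↪ α} (h : AvoidsBridges G K φ) {a₁ a₂ b₁ b₂ : β}
    (ha : IsLeafEdge K a₁ a₂) (hb : IsLeafEdge K b₁ b₂) (hab : a₁ ≠ b₂) (hba : b₁ ≠ a₂)
    (hnab : ¬ G.IsBridge s(φ a₁, φ b₂)) (hnba : ¬ G.IsBridge s(φ b₁, φ a₂)) :
    AvoidsBridges G K (exchange φ a₂ b₂) :=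
  forall_adj_exchange (R := fun p q ↦ ¬ G.IsBridge s(p, q))
    (fun _ _ hn ↦ by rwa [Sym2.eq_swap]) ha hb hab hba h hnab hnba

/- If the exchange destroyed the crossing of `D`, then `D` would separate both `a₁` from `a₂` and
`b₁` from `b₂`, so that all four quadrants of `A` and `D` would be inhabited. -/
lemma Crosses.exchange {φ : β ↪ α} {u v w z : α} (h : Crosses K φ D) (hG : G.Connected)
    (hA : IsBridgeCut G A u v) (hD : IsBridgeCut G D w z) {a₁ a₂ b₁ b₂ : β}
    (ha : IsLeafEdge K a₁ a₂) (hb : IsLeafEdge K b₁ b₂) (ha₁ : φ a₁ ∈ A) (ha₂ : φ a₂ ∈ A)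
    (hb₁ : φ b₁ ∉ A) (hb₂ : φ b₂ ∉ A) : Crosses K (exchange φ a₂ b₂) D := by
  have hab : a₁ ≠ b₂ := fun h ↦ hb₂ (h ▸ ha₁)
  have hba : b₁ ≠ a₂ := fun h ↦ hb₁ (h ▸ ha₂)
  have hval_a := exchange_apply_of_ne φ ha.1.ne hab
  have hval_b := exchange_apply_of_ne φ hba hb.1.ne
  by_contra hn
  rw [not_crosses_iff] at hn
  have hDa : φ a₁ ∈ D ↔ φ b₂ ∈ D := by
    simpa only [hval_a, exchange_apply_left] using hn a₁ a₂ ha.1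
  have hDb : φ b₁ ∈ D ↔ φ a₂ ∈ D := by
    simpa only [hval_b, exchange_apply_right] using hn b₁ b₂ hb.1
  have hsep : ¬ (φ a₁ ∈ D ↔ φ a₂ ∈ D) := by
    intro hsame
    have hback := forall_adj_exchange (R := fun p q ↦ p ∈ D ↔ q ∈ D) (fun _ _ ↦ Iff.symm)
      ha hb hab hba hn (by rwa [hval_a, exchange_apply_right])
      (by rw [hval_b, exchange_apply_left, hDb, ← hDa, hsame])
    rw [exchange_exchange] at hback
    exact not_crosses_iff.2 hback h
  have hsep' : ¬ (φ b₂ ∈ D ↔ φ b₁ ∈ D) := fun hsame ↦ hsep (hDa.trans (hsame.trans hDb))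
  rcases hA.subset_or_disjoint_or hD hG with hAD | hdisj | hDA | hcompl
  · exact hsep (iff_of_true (hAD ha₁) (hAD ha₂))
  · exact hsep (iff_of_false (Set.disjoint_left.1 hdisj ha₁) (Set.disjoint_left.1 hdisj ha₂))
  · exact hsep' (iff_of_false (fun h ↦ hb₂ (hDA h)) (fun h ↦ hb₁ (hDA h)))
  · exact hsep' (iff_of_true (hcompl hb₂) (hcompl hb₁))

lemma IsStarForest.exists_isLeafEdge (hK : IsStarForest K) {φ : β ↪ α}
    (hA : ∀ x y, K.Adj x y → (φ x ∈ A ↔ φ y ∈ A)) (hmeet : ∃ s ∈ φ '' K.support, s ∈ A) :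
    ∃ a b, IsLeafEdge K a b ∧ φ a ∈ A ∧ φ b ∈ A := by
  obtain ⟨_, ⟨x, ⟨y, hxy⟩, rfl⟩, hx⟩ := hmeet
  have hy := (hA x y hxy).1 hx
  rcases hK x y hxy with h | h
  · exact ⟨x, y, h, hx, hy⟩
  · exact ⟨y, x, h, hy, hx⟩

lemma IsBridgeCut.not_isBridge_and_or {u v a a' b b' : α} (hA : IsBridgeCut G A u v)
    (hG : G.Connected) (ha : a ∈ A) (ha' : a' ∈ A) (haa' : a ≠ a') (hb : b ∉ A) (hb' : b' ∉ A)
    (hbb' : b ≠ b') : (¬ G.IsBridge s(a, b') ∧ ¬ G.IsBridge s(b, a')) ∨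
      (¬ G.IsBridge s(a, b) ∧ ¬ G.IsBridge s(b', a')) := by
  have hmem (x) (hx : x ∈ A) (y) (hy : y ∉ A) (h : G.IsBridge s(x, y)) : x = u ∧ y = v :=
    hA.eq_of_isBridge hG hx hy h
  have hmem' (y) (hy : y ∉ A) (x) (hx : x ∈ A) (h : G.IsBridge s(y, x)) : x = u ∧ y = v :=
    hmem x hx y hy (Sym2.eq_swap ▸ h)
  grind

lemma exists_isLeafEdge_not_isBridge {φ : β ↪ α} {u v : α} (hG : G.Connected)
    (hT : BridgeIndependent G (φ '' K.support) ∨ IsPartialMatching K)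
    (hA : IsBridgeCut G A u v) {a₁ a₂ b₁ b₂ : β} (ha : IsLeafEdge K a₁ a₂)
    (hb : IsLeafEdge K b₁ b₂) (ha₁ : φ a₁ ∈ A) (ha₂ : φ a₂ ∈ A) (hb₁ : φ b₁ ∉ A)
    (hb₂ : φ b₂ ∉ A) : ∃ c₁ c₂, IsLeafEdge K c₁ c₂ ∧ φ c₁ ∉ A ∧ φ c₂ ∉ A ∧
      ¬ G.IsBridge s(φ a₁, φ c₂) ∧ ¬ G.IsBridge s(φ c₁, φ a₂) := by
  rcases hT with hT | hK
  · exact ⟨b₁, b₂, hb, hb₁, hb₂,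
      hT _ ⟨a₁, ⟨a₂, ha.1⟩, rfl⟩ _ ⟨b₂, ⟨b₁, hb.1.symm⟩, rfl⟩,
      hT _ ⟨b₁, ⟨b₂, hb.1⟩, rfl⟩ _ ⟨a₂, ⟨a₁, ha.1.symm⟩, rfl⟩⟩
  · rcases hA.not_isBridge_and_or hG ha₁ ha₂ (φ.injective.ne ha.1.ne) hb₁ hb₂
      (φ.injective.ne hb.1.ne) with h | h
    · exact ⟨b₁, b₂, hb, hb₁, hb₂, h⟩
    · exact ⟨b₂, b₁, hK.isLeafEdge hb.1.symm, hb₂, hb₁, h⟩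

lemma exists_crosses_of_not_crosses {φ : β ↪ α} {u v : α} (hG : G.Connected)
    (hK : IsStarForest K) (hT : BridgeIndependent G (φ '' K.support) ∨ IsPartialMatching K)
    (hmeet : MeetsBridgeSides G (φ '' K.support)) (hφ : AvoidsBridges G K φ)
    (hA : IsBridgeCut G A u v) (hn : ¬ Crosses K φ A) :
    ∃ ψ : β ↪ α, ψ '' K.support = φ '' K.support ∧ AvoidsBridges G K ψ ∧ Crosses K ψ A ∧
      ∀ D w z, IsBridgeCut G D w z → Crosses K φ D → Crosses K ψ D := by
  rw [not_crosses_iff] at hn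
  obtain ⟨a₁, a₂, ha, ha₁, ha₂⟩ := hK.exists_isLeafEdge hn (hmeet A u v hA)
  obtain ⟨b₁', b₂', hb', hb₁', hb₂'⟩ := hK.exists_isLeafEdge (A := Aᶜ)
    (fun x y hxy ↦ not_congr (hn x y hxy)) (hmeet Aᶜ v u hA.compl)
  obtain ⟨b₁, b₂, hb, hb₁, hb₂, hnab, hnba⟩ :=
    exists_isLeafEdge_not_isBridge hG hT hA ha hb' ha₁ ha₂ hb₁' hb₂'
  have hab : a₁ ≠ b₂ := fun h ↦ hb₂ (h ▸ ha₁)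
  have hba : b₁ ≠ a₂ := fun h ↦ hb₁ (h ▸ ha₂)
  refine ⟨exchange φ a₂ b₂,
    exchange_image φ ⟨a₁, ha.1.symm⟩ ⟨b₁, hb.1.symm⟩,
    hφ.exchange ha hb hab hba hnab hnba, ⟨a₁, a₂, ha.1, ?_, ?_⟩,
    fun D w z hD h ↦ h.exchange hG hA hD ha hb ha₁ ha₂ hb₁ hb₂⟩
  · rwa [exchange_apply_of_ne φ ha.1.ne hab]
  · rwa [exchange_apply_left]

lemma exists_forall_crosses [Finite α] [Finite β] {φ : β ↪ α} (hG : G.Connected)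
    (hK : IsStarForest K) (hT : BridgeIndependent G (φ '' K.support) ∨ IsPartialMatching K)
    (hmeet : MeetsBridgeSides G (φ '' K.support)) (hφ : AvoidsBridges G K φ) :
    ∃ ψ : β ↪ α, AvoidsBridges G K ψ ∧ ∀ A u v, IsBridgeCut G A u v → Crosses K ψ A := by
  obtain ⟨ψ, ⟨hψT, hψ⟩, hmax⟩ := Set.Finite.exists_maximalFor
    (fun ψ : β ↪ α ↦ {D | (∃ w z, IsBridgeCut G D w z) ∧ Crosses K ψ D})
    {ψ | ψ '' K.support = φ '' K.support ∧ AvoidsBridges G K ψ} (Set.toFinite _) ⟨φ, rfl, hφ⟩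
  refine ⟨ψ, hψ, fun A u v hA ↦ ?_⟩
  by_contra hn
  rw [← hψT] at hT hmeet
  obtain ⟨ψ', hψ'T, hψ', hcross, hpres⟩ :=
    exists_crosses_of_not_crosses hG hK hT hmeet hψ hA hn
  refine hn (hmax ⟨hψ'T.trans hψT, hψ'⟩ ?_ ⟨⟨u, v, hA⟩, hcross⟩).2
  rintro D ⟨⟨w, z, hD⟩, hcrossD⟩
  exact ⟨⟨w, z, hD⟩, hpres D w z hD hcrossD⟩

lemma exists_twoEdgeConnected_superpose_of_avoidsBridges [Finite α] [Finite β] {φ : β ↪ α}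
    {H : SimpleGraph β} (hG : G.Connected) (hKH : K ≤ H) (hK : IsStarForest K)
    (hT : BridgeIndependent G (φ '' K.support) ∨ IsPartialMatching K)
    (hmeet : MeetsBridgeSides G (φ '' K.support)) (hφ : AvoidsBridges G K φ) :
    ∃ ψ : β ↪ α, TwoEdgeConnected (superpose G H ψ) := by
  obtain ⟨ψ, hψ, hcross⟩ := exists_forall_crosses hG hK hT hmeet hφ
  refine ⟨ψ, (twoEdgeConnected_superpose_iff hG).2 fun A u v hA ↦ ?_⟩
  obtain ⟨x, y, hxy, hx, hy⟩ := hcross A u v hA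
  refine ⟨x, y, hKH hxy, hx, hy, ?_⟩
  rintro ⟨rfl, rfl⟩
  exact hψ x y hxy hA.isBridge

end Exchange

section Subgraph

variable {β : Type*} {H K : SimpleGraph β} {p : ℕ} {x y z w : β}

lemma mem_support_deleteEdges_of_ne (hw : w ∈ K.support) (hx : w ≠ x) (hy : w ≠ y) :
    w ∈ (K.deleteEdges {s(x, y)}).support := by
  obtain ⟨t, hwt⟩ := hw
  refine ⟨t, deleteEdges_adj.2 ⟨hwt, fun h ↦ ?_⟩⟩
  rcases Sym2.eq_iff.1 h with h | h
  · exact hx h.1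
  · exact hy h.1

lemma mem_support_deleteEdges_of_adj (h : K.Adj x z) (hzy : z ≠ y) :
    x ∈ (K.deleteEdges {s(x, y)}).support :=
  ⟨z, deleteEdges_adj.2 ⟨h, fun h ↦ hzy (Sym2.congr_right.1 h)⟩⟩

lemma ncard_support_deleteEdges_lt_of_minimal
    (hK : Minimal (fun K ↦ K ≤ H ∧ p ≤ K.support.ncard) K) (hxy : K.Adj x y) :
    (K.deleteEdges {s(x, y)}).support.ncard < p := by
  by_contra! hp
  have hle : K ≤ K.deleteEdges {s(x, y)} :=
    hK.le_of_le ⟨(deleteEdges_le _).trans hK.prop.1, hp⟩ (deleteEdges_le _)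
  exact (deleteEdges_adj.1 (hle hxy)).2 rfl

lemma isStarForest_of_minimal [Finite β]
    (hK : Minimal (fun K ↦ K ≤ H ∧ p ≤ K.support.ncard) K) : IsStarForest K := by
  intro x y hxy
  by_contra! h
  obtain ⟨z, hz, hzx⟩ : ∃ z, K.Adj y z ∧ z ≠ x := by
    simpa only [IsLeafEdge, hxy, true_and, not_forall, exists_prop] using h.1
  obtain ⟨t, ht, hty⟩ : ∃ t, K.Adj x t ∧ t ≠ y := by
    simpa only [IsLeafEdge, hxy.symm, true_and, not_forall, exists_prop] using h.2
  have hsub : K.support ⊆ (K.deleteEdges {s(x, y)}).support := by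
    intro w hw
    rcases eq_or_ne w x with rfl | hwx
    · exact mem_support_deleteEdges_of_adj ht hty
    rcases eq_or_ne w y with rfl | hwy
    · exact Sym2.eq_swap (a := w) ▸ mem_support_deleteEdges_of_adj hz hzx
    exact mem_support_deleteEdges_of_ne hw hwx hwy
  exact (ncard_support_deleteEdges_lt_of_minimal hK hxy).not_ge
    (hK.prop.2.trans (Set.ncard_le_ncard hsub))

lemma ncard_support_le_of_minimal [Finite β]
    (hK : Minimal (fun K ↦ K ≤ H ∧ p ≤ K.support.ncard) K) : K.support.ncard ≤ p + 1 := by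
  rcases K.support.eq_empty_or_nonempty with h | ⟨x, y, hxy⟩
  · simp [h]
  have hsub : K.support ⊆ insert x (insert y (K.deleteEdges {s(x, y)}).support) := by
    intro w hw
    by_contra! h
    simp only [Set.mem_insert_iff, not_or] at h
    exact h.2.2 (mem_support_deleteEdges_of_ne hw h.1 h.2.1)
  have hle := Set.ncard_le_ncard hsub
  have hx := Set.ncard_insert_le x (insert y (K.deleteEdges {s(x, y)}).support)
  have hy := Set.ncard_insert_le y (K.deleteEdges {s(x, y)}).support
  have hlt := ncard_support_deleteEdges_lt_of_minimal hK hxy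
  omega

lemma isPartialMatching_of_minimal [Finite β]
    (hK : Minimal (fun K ↦ K ≤ H ∧ p ≤ K.support.ncard) K) (hp : p < K.support.ncard) :
    IsPartialMatching K := by
  intro x y z hxy hxz
  by_contra hyz
  have hsub : K.support ⊆ insert y (K.deleteEdges {s(x, y)}).support := by
    intro w hw
    rcases eq_or_ne w y with rfl | hwy
    · exact Set.mem_insert w _
    rcases eq_or_ne w x with rfl | hwx
    · exact Set.mem_insert_of_mem _ (mem_support_deleteEdges_of_adj hxz (Ne.symm hyz))
    exact Set.mem_insert_of_mem _ (mem_support_deleteEdges_of_ne hw hwx hwy)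
  have hle := Set.ncard_le_ncard hsub
  have hy := Set.ncard_insert_le y (K.deleteEdges {s(x, y)}).support
  have hlt := ncard_support_deleteEdges_lt_of_minimal hK hxy
  omega

lemma exists_isStarForest_or_isPartialMatching [Finite β] (hp : p ≤ H.support.ncard) :
    ∃ K ≤ H, (IsStarForest K ∧ K.support.ncard = p) ∨
      (IsPartialMatching K ∧ K.support.ncard = p + 1) := by
  obtain ⟨K, hKH, hK⟩ := exists_minimal_le_of_wellFoundedLT
    (fun K ↦ K ≤ H ∧ p ≤ K.support.ncard) H ⟨le_rfl, hp⟩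
  refine ⟨K, hKH, ?_⟩
  rcases hK.prop.2.eq_or_lt with heq | hlt
  · exact Or.inl ⟨isStarForest_of_minimal hK, heq.symm⟩
  · exact Or.inr ⟨isPartialMatching_of_minimal hK hlt,
      (ncard_support_le_of_minimal hK).antisymm hlt⟩

lemma IsPartialMatching.even_ncard_support [Finite β] (hK : IsPartialMatching K) :
    Even K.support.ncard := by
  classical
  have := Fintype.ofFinite β
  have hdeg (v) : Odd (K.degree v) ↔ v ∈ K.support := by
    rw [mem_support, ← degree_pos_iff_exists_adj]
    refine ⟨Odd.pos, fun h ↦ ?_⟩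
    obtain ⟨t, ht⟩ := (K.degree_pos_iff_exists_adj v).1 h
    rw [degree_eq_one_iff_existsUnique_adj.2 ⟨t, ht, fun z hz ↦ hK v z t hz ht⟩]
    exact odd_one
  convert K.even_card_odd_degree_vertices
  rw [← Set.ncard_coe_finset]
  congr
  ext v
  simp [hdeg]

lemma support_eq_univ_of_forall_exists_adj (hH : ∀ x, ∃ y, H.Adj x y) : H.support = Set.univ :=
  Set.eq_univ_of_forall hH

lemma support_deleteIncidenceSet_eq (h : ∀ v ≠ w, ∃ t ≠ w, H.Adj v t) :
    (H.deleteIncidenceSet w).support = {w}ᶜ := by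
  ext v
  simp only [mem_support, deleteIncidenceSet_adj, Set.mem_compl_iff, Set.mem_singleton_iff]
  constructor
  · rintro ⟨t, -, hv, -⟩
    exact hv
  · intro hv
    obtain ⟨t, ht, hvt⟩ := h v hv
    exact ⟨t, hvt, hv, ht⟩

/- If `y` is the only neighbour of `v`, then `y` is the only vertex that `v` could isolate. -/
lemma exists_support_deleteIncidenceSet_eq (hH : ∀ x, ∃ y, H.Adj x y)
    (hn : ¬ IsPartialMatching H) : ∃ w, (H.deleteIncidenceSet w).support = {w}ᶜ := by
  simp only [IsPartialMatching, not_forall] at hn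
  obtain ⟨x, y, z, hxy, hxz, hyz⟩ := hn
  by_cases h : ∀ v ≠ y, ∃ t ≠ y, H.Adj v t
  · exact ⟨y, support_deleteIncidenceSet_eq h⟩
  push Not at h
  obtain ⟨v, -, hv⟩ := h
  have hvy (t) (ht : H.Adj v t) : t = y := by
    by_contra hty
    exact hv t hty ht
  refine ⟨v, support_deleteIncidenceSet_eq fun w _ ↦ ?_⟩
  rcases eq_or_ne w y with rfl | hwy
  · exact ⟨x, fun h ↦ hyz (hvy z (h ▸ hxz)).symm, hxy.symm⟩
  · obtain ⟨t, ht⟩ := hH w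
    exact ⟨t, fun h ↦ hwy (hvy w (h ▸ ht.symm)), ht⟩

lemma exists_isStarForest_or_odd [Fintype β] (hH : ∀ x, ∃ y, H.Adj x y)
    (hp : p ≤ Fintype.card β) : (∃ K ≤ H, IsStarForest K ∧ K.support.ncard = p) ∨
      Odd p ∧ (∃ K ≤ H, IsPartialMatching K ∧ K.support.ncard = p + 1) ∧
        (p + 1 = Fintype.card β → IsPartialMatching H) := by
  have hcard : H.support.ncard = Fintype.card β := by
    rw [support_eq_univ_of_forall_exists_adj hH, Set.ncard_univ, Nat.card_eq_fintype_card]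
  obtain ⟨K, hKH, ⟨hK, hKp⟩ | ⟨hK, hKp⟩⟩ :=
    exists_isStarForest_or_isPartialMatching (hp.trans_eq hcard.symm)
  · exact Or.inl ⟨K, hKH, hK, hKp⟩
  have hodd : Odd p := by
    have heven := hK.even_ncard_support
    rwa [hKp, Nat.even_add_one, Nat.not_even_iff_odd] at heven
  by_cases hsmall : p + 1 = Fintype.card β → IsPartialMatching H
  · exact Or.inr ⟨hodd, ⟨K, hKH, hK, hKp⟩, hsmall⟩
  push Not at hsmall
  obtain ⟨w, hw⟩ := exists_support_deleteIncidenceSet_eq hH hsmall.2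
  have hwp : (H.deleteIncidenceSet w).support.ncard = p := by
    rw [hw, Set.ncard_compl, Set.ncard_singleton, Nat.card_eq_fintype_card, ← hsmall.1,
      Nat.add_sub_cancel]
  obtain ⟨L, hLH, ⟨hL, hLp⟩ | ⟨-, hLp⟩⟩ := exists_isStarForest_or_isPartialMatching hwp.ge
  · exact Or.inl ⟨L, hLH.trans (deleteIncidenceSet_le H w), hL, hLp⟩
  · have hle := Set.ncard_le_ncard (support_mono hLH)
    omega

lemma isMatchingGraph_iff [Nonempty β] (hH : ∀ x, ∃ y, H.Adj x y) :
    IsMatchingGraph H ↔ IsPartialMatching H := by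
  refine ⟨fun h x y z hy hz ↦ (h.2 x).unique hy hz, fun h ↦ ⟨‹_›, fun x ↦ ?_⟩⟩
  obtain ⟨y, hy⟩ := hH x
  exact ⟨y, hy, fun z hz ↦ h x z y hz hy⟩

lemma isPartialMatching_of_card_le_two [Fintype β] (h : Fintype.card β ≤ 2) :
    IsPartialMatching H := by
  classical
  intro x y z hy hz
  by_contra hyz
  have hthree : ({x, y, z} : Finset β).card = 3 :=
    Finset.card_eq_three.2 ⟨x, y, z, hy.ne, hz.ne, hyz, rfl⟩
  have hle := Finset.card_le_univ ({x, y, z} : Finset β)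
  omega

end Subgraph

section Placement

variable {α β : Type*} [Fintype α] [Fintype β] {G : SimpleGraph α} {H K : SimpleGraph β}
  {S T : Set α} {x u : α}

lemma exists_embedding_image_eq (hcard : Fintype.card β ≤ Fintype.card α) {R : Set β}
    (hRT : R.ncard = T.ncard) : ∃ φ : β ↪ α, φ '' R = T := by
  classical
  obtain ⟨φ⟩ := Function.Embedding.nonempty_of_card_le hcard
  have himage : (φ '' R).ncard = T.ncard := (Set.ncard_image_of_injective R φ.injective).trans hRT
  obtain ⟨e⟩ : Nonempty ({a // a ∈ φ '' R} ≃ {a // a ∈ T}) := Finite.card_eq.1 himage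
  refine ⟨φ.trans e.extendSubtype.toEmbedding, Set.eq_of_subset_of_ncard_le ?_ ?_⟩
  · rintro _ ⟨y, hy, rfl⟩
    exact e.extendSubtype_mem (φ y) (Set.mem_image_of_mem φ hy)
  · rw [Set.ncard_image_of_injective R (Function.Embedding.injective _), hRT]

lemma exists_embedding_image_eq_of_adj (hcard : Fintype.card β ≤ Fintype.card α)
    (hKT : K.support.ncard = T.ncard) (hx : x ∈ T) (hu : u ∈ T) (hxu : x ≠ u) :
    ∃ φ : β ↪ α, φ '' K.support = T ∧ ∃ k₁ k₂, K.Adj k₁ k₂ ∧ φ k₁ = x ∧ φ k₂ = u := by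
  obtain ⟨φ, hφ⟩ := exists_embedding_image_eq hcard hKT
  obtain ⟨k₁, hk₁, rfl⟩ := hφ.ge hx
  obtain ⟨k₂, hk⟩ := K.mem_support.1 hk₁
  obtain ⟨k₃, hk₃, rfl⟩ := hφ.ge hu
  have hne : k₁ ≠ k₃ := fun h ↦ hxu (congrArg φ h)
  refine ⟨exchange φ k₂ k₃, ?_, k₁, k₂, hk, exchange_apply_of_ne φ hk.ne hne,
    exchange_apply_left φ k₂ k₃⟩
  rw [exchange_image φ (K.mem_support.2 ⟨k₁, hk.symm⟩) hk₃, hφ]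

lemma exists_twoEdgeConnected_superpose_of_isStarForest (hG : G.Connected)
    (hcard : Fintype.card β ≤ Fintype.card α) (hS : MeetsBridgeSides G S)
    (hind : BridgeIndependent G S) (hKH : K ≤ H) (hK : IsStarForest K)
    (hKS : K.support.ncard = S.ncard) : ∃ φ : β ↪ α, TwoEdgeConnected (superpose G H φ) := by
  obtain ⟨φ, rfl⟩ := exists_embedding_image_eq hcard hKS
  exact exists_twoEdgeConnected_superpose_of_avoidsBridges hG hKH hK (Or.inl hind) hS
    fun y z hyz ↦ hind _ ⟨y, ⟨z, hyz⟩, rfl⟩ _ ⟨z, ⟨y, hyz.symm⟩, rfl⟩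

lemma exists_twoEdgeConnected_superpose_of_isPartialMatching (hG : G.Connected)
    (hcard : Fintype.card β ≤ Fintype.card α) (hS : MeetsBridgeSides G S)
    (hind : BridgeIndependent G S) (hx : x ∉ S) (hu : u ∈ S) (hxu : ¬ G.IsBridge s(x, u))
    (hKH : K ≤ H) (hK : IsPartialMatching K) (hKS : K.support.ncard = S.ncard + 1) :
    ∃ φ : β ↪ α, TwoEdgeConnected (superpose G H φ) := by
  obtain ⟨φ, hφ, k₁, k₂, hk, rfl, rfl⟩ := exists_embedding_image_eq_of_adj hcard
    (hKS.trans (Set.ncard_insert_of_notMem hx).symm) (Set.mem_insert x S)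
    (Set.mem_insert_of_mem x hu) (fun h ↦ hx (h ▸ hu))
  refine exists_twoEdgeConnected_superpose_of_avoidsBridges (φ := φ) hG hKH hK.isStarForest
    (Or.inr hK) (fun A a b hA ↦ ?_) (fun y z hyz ↦ ?_)
  · obtain ⟨s, hs, hsA⟩ := hS A a b hA
    exact ⟨s, hφ.ge (Set.mem_insert_of_mem _ hs), hsA⟩
  have hmem (y) (hy : y ∈ K.support) (hne : y ≠ k₁) : φ y ∈ S :=
    (hφ.le (Set.mem_image_of_mem φ hy)).resolve_left (φ.injective.ne hne)
  rcases eq_or_ne y k₁ with rfl | hy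
  · rwa [hK _ z k₂ hyz hk]
  rcases eq_or_ne z k₁ with rfl | hz
  · rwa [hK _ y k₂ hyz.symm hk, Sym2.eq_swap]
  exact hind _ (hmem y ⟨z, hyz⟩ hy) _ (hmem z ⟨y, hyz.symm⟩ hz)

end Placement

section Star

variable {α β : Type*} {G : SimpleGraph α} {H : SimpleGraph β} {S : Set α}

lemma completeBipartiteGraph_fin_one (n : ℕ) :
    completeBipartiteGraph (Fin 1) (Fin n) = starGraph (Sum.inl 0) := by
  ext a b
  rcases a with i | i <;> rcases b with j | j <;>
    simp [starGraph_adj, Fin.fin_one_eq_zero]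

lemma nonempty_iso_completeBipartiteGraph_fin_one_iff [Fintype α] {n : ℕ} :
    Nonempty (G ≃g completeBipartiteGraph (Fin 1) (Fin n)) ↔
      Fintype.card α = n + 1 ∧ ∃ c, G = starGraph c := by
  classical
  rw [completeBipartiteGraph_fin_one]
  constructor
  · rintro ⟨f⟩
    refine ⟨by simp [Fintype.card_congr f.toEquiv, add_comm], f.symm (Sum.inl 0), ?_⟩
    ext a b
    rw [← f.map_adj_iff, starGraph_adj, starGraph_adj, f.injective.ne_iff]
    exact and_congr_right' (or_congr f.toEquiv.eq_symm_apply.symm f.toEquiv.eq_symm_apply.symm)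
  · rintro ⟨hcard, c, rfl⟩
    obtain ⟨e⟩ : Nonempty (α ≃ Fin 1 ⊕ Fin n) :=
      ⟨Fintype.equivOfCardEq (by simp [hcard, add_comm])⟩
    let f : α ≃ Fin 1 ⊕ Fin n := e.trans (Equiv.swap (e c) (Sum.inl 0))
    have hf : f c = Sum.inl 0 := Equiv.swap_apply_left _ _
    refine ⟨f, fun {a b} ↦ ?_⟩
    simp only [starGraph_adj, ← hf, f.injective.ne_iff, f.injective.eq_iff]

lemma exists_odd_nonempty_iso_completeBipartiteGraph_iff [Fintype α] [Nonempty α] :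
    (∃ n, Odd n ∧ Nonempty (G ≃g completeBipartiteGraph (Fin 1) (Fin n))) ↔
      Even (Fintype.card α) ∧ ∃ c, G = starGraph c := by
  simp only [nonempty_iso_completeBipartiteGraph_fin_one_iff]
  constructor
  · rintro ⟨n, hn, hcard, hstar⟩
    exact ⟨hcard ▸ hn.add_one, hstar⟩
  · rintro ⟨heven, hstar⟩
    have hpos : 0 < Fintype.card α := Fintype.card_pos
    exact ⟨Fintype.card α - 1, Nat.Even.sub_odd hpos heven odd_one, by omega, hstar⟩

lemma isBridgeCut_starGraph {a c : α} (h : a ≠ c) : IsBridgeCut (starGraph c) {a} a c where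
  mem := rfl
  notMem := h.symm
  adj := starGraph_center_adj' h.symm
  eq_of_adj := by
    rintro _ rfl b - hab
    exact ⟨rfl, (starGraph_adj.1 hab).2.resolve_left h⟩

/- Each leaf of the star must carry a vertex of `H` whose partner is not at the centre `c`. So no
vertex of `H` is at `c`: its only neighbour would occupy a leaf. -/
lemma range_eq_of_twoEdgeConnected_superpose_starGraph {c : α} {φ : β ↪ α}
    (hiso : ∀ x, ∃ y, H.Adj x y) (hH : IsPartialMatching H)
    (hF : TwoEdgeConnected (superpose (starGraph c) H φ)) : Set.range φ = {c}ᶜ := by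
  have hleaf (a) (ha : a ≠ c) : ∃ x y, H.Adj x y ∧ φ x = a ∧ φ y ≠ c := by
    obtain ⟨x, y, hxy, hx, -, hne⟩ :=
      (twoEdgeConnected_superpose_iff (connected_starGraph c)).1 hF _ _ _
        (isBridgeCut_starGraph ha)
    exact ⟨x, y, hxy, hx, fun h ↦ hne ⟨hx, h⟩⟩
  refine Set.Subset.antisymm ?_ fun a ha ↦ ?_
  · rintro _ ⟨z, rfl⟩ hz
    obtain ⟨y, hzy⟩ := hiso z
    obtain ⟨x, w, hxw, hx, hw⟩ := hleaf (φ y) fun h ↦ hzy.ne (φ.injective (hz.trans h.symm))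
    rw [φ.injective hx] at hxw
    exact hw (hH y w z hxw hzy.symm ▸ hz)
  · obtain ⟨x, -, -, hx, -⟩ := hleaf a ha
    exact ⟨x, hx⟩

lemma not_twoEdgeConnected_superpose_starGraph [Fintype α] {c : α} {φ : β ↪ α}
    (hiso : ∀ x, ∃ y, H.Adj x y) (hH : IsPartialMatching H) (heven : Even (Fintype.card α)) :
    ¬ TwoEdgeConnected (superpose (starGraph c) H φ) := by
  intro hF
  have hβfin : Finite β := Finite.of_injective φ φ.injective
  have hrange := congrArg Set.ncard (range_eq_of_twoEdgeConnected_superpose_starGraph hiso hH hF)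
  have hβ := hH.even_ncard_support
  rw [support_eq_univ_of_forall_exists_adj hiso, ← Set.ncard_image_of_injective _ φ.injective,
    Set.image_univ, hrange] at hβ
  have hadd := Set.ncard_add_ncard_compl {c}
  rw [Set.ncard_singleton, Nat.card_eq_fintype_card] at hadd
  exact Nat.not_even_iff_odd.2 (hadd ▸ hβ.one_add) heven

lemma MeetsBridgeSides.nontrivial (hG : G.Connected) (hS : MeetsBridgeSides G S)
    (hn : ¬ TwoEdgeConnected G) : S.Nontrivial := by
  rw [twoEdgeConnected_iff_forall_not_isBridgeCut hG] at hn
  push Not at hn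
  obtain ⟨A, u, v, hA⟩ := hn
  obtain ⟨s, hs, hsA⟩ := hS A u v hA
  obtain ⟨t, ht, htA⟩ := hS Aᶜ v u hA.compl
  exact ⟨s, hs, t, ht, fun h ↦ htA (h ▸ hsA)⟩

/- Bridges lie on no cycle: two vertices outside `S` would give a 4-cycle of bridges, and an edge
inside `S` a triangle. -/
lemma exists_eq_starGraph_of_forall_isBridge (hG : G.Connected)
    (h : ∀ x ∉ S, ∀ u ∈ S, G.IsBridge s(x, u)) (hS : S.Nontrivial) (hSuniv : S ≠ Set.univ) :
    ∃ c, S = {c}ᶜ ∧ G = starGraph c := by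
  obtain ⟨c, hc⟩ := (Set.ne_univ_iff_exists_notMem S).1 hSuniv
  have hadj (x) (hx : x ∉ S) (u) (hu : u ∈ S) : G.Adj x u := adj_of_isBridge hG (h x hx u hu)
  have hside (u) (hu : u ∈ S) : ∃ A, IsBridgeCut G A c u ∧ ∀ w ∈ S, w ≠ u → w ∈ A := by
    obtain ⟨A, hA⟩ := exists_isBridgeCut_of_isBridge hG (h c hc u hu)
    refine ⟨A, hA, fun w hw hwu ↦ ?_⟩
    by_contra hwA
    exact hwu (hA.eq_of_adj c hA.mem w hwA (hadj c hc w hw)).2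
  have hSc : S = {c}ᶜ := by
    refine Set.Subset.antisymm (fun w hw hwc ↦ hc (hwc ▸ hw)) fun x hxc ↦ ?_
    by_contra hx
    obtain ⟨s, hs, t, ht, hst⟩ := hS
    obtain ⟨A, hA, hSA⟩ := hside s hs
    by_cases hxA : x ∈ A
    · exact hxc (hA.eq_of_adj x hxA s hA.notMem (hadj x hx s hs)).1
    · exact hc ((hA.eq_of_adj t (hSA t ht hst.symm) x hxA (hadj x hx t ht).symm).1 ▸ ht)
  refine ⟨c, hSc, ?_⟩
  subst hSc
  ext a b
  rw [starGraph_adj]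
  refine ⟨fun hab ↦ ⟨hab.ne, ?_⟩, ?_⟩
  · by_contra! hne
    obtain ⟨A, hA, hSA⟩ := hside a hne.1
    exact hne.2 (hA.eq_of_adj b (hSA b hne.2 hab.ne') a hA.notMem hab.symm).1
  · rintro ⟨hab, rfl | rfl⟩
    · exact hadj a hc b hab.symm
    · exact (hadj b hc a hab).symm

end Star

section Existence

variable {α β : Type*} {G : SimpleGraph α} {H : SimpleGraph β}

lemma eq_starGraph_of_forall_eq_or_eq {s t : α} (hst : G.Adj s t) (h : ∀ w, w = s ∨ w = t) :
    G = starGraph s := by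
  ext a b
  rw [starGraph_adj]
  rcases h a with rfl | rfl <;> rcases h b with rfl | rfl <;> simp [hst, hst.symm, hst.ne, hst.ne']

lemma card_eq_two_of_forall_eq_or_eq [Fintype α] {s t : α} (hst : s ≠ t)
    (h : ∀ w, w = s ∨ w = t) : Fintype.card α = 2 := by
  rw [Fintype.card_eq_nat_card, ← Set.ncard_univ, ← Set.ncard_pair hst]
  exact congrArg Set.ncard (Set.eq_univ_of_forall h).symm

theorem exists_twoEdgeConnected_superpose [Fintype α] [Fintype β] (hG : G.Connected)
    (hiso : ∀ x, ∃ y, H.Adj x y) (hcard : Fintype.card β ≤ Fintype.card α)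
    (hn : ¬ TwoEdgeConnected G) (hp : numPendant G ≤ Fintype.card β)
    (hstar : ¬ ((Even (Fintype.card α) ∧ ∃ c, G = starGraph c) ∧ IsPartialMatching H)) :
    ∃ φ : β ↪ α, TwoEdgeConnected (superpose G H φ) := by
  obtain ⟨S, hSp, hS, hpair⟩ := exists_meetsBridgeSides_ncard_eq_numPendant hG
  have hind : BridgeIndependent G S := by
    intro s hs t ht hst
    have hadj := adj_of_isBridge hG hst
    have htwo := card_eq_two_of_forall_eq_or_eq hadj.ne (hpair s hs t ht hst)
    exact hstar ⟨⟨htwo ▸ even_two, s, eq_starGraph_of_forall_eq_or_eq hadj (hpair s hs t ht hst)⟩,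
      isPartialMatching_of_card_le_two (hcard.trans htwo.le)⟩
  rcases exists_isStarForest_or_odd hiso hp with
    ⟨K, hKH, hK, hKp⟩ | ⟨hodd, ⟨K, hKH, hK, hKp⟩, hmatching⟩
  · exact exists_twoEdgeConnected_superpose_of_isStarForest hG hcard hS hind hKH hK
      (hKp.trans hSp.symm)
  by_cases hbridge : ∀ x ∉ S, ∀ u ∈ S, G.IsBridge s(x, u)
  · have hle : numPendant G + 1 ≤ Fintype.card β := by
      rw [← hKp, Fintype.card_eq_nat_card]
      exact Set.ncard_le_card K.support
    have hSuniv : S ≠ Set.univ := by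
      rintro rfl
      rw [Set.ncard_univ, Nat.card_eq_fintype_card] at hSp
      omega
    obtain ⟨c, rfl, hc⟩ :=
      exists_eq_starGraph_of_forall_isBridge hG hbridge (hS.nontrivial hG hn) hSuniv
    have hα := Set.ncard_add_ncard_compl {c}
    rw [Set.ncard_singleton, hSp, Nat.card_eq_fintype_card, add_comm] at hα
    exact absurd ⟨⟨hα ▸ hodd.add_one, c, hc⟩, hmatching (by omega)⟩ hstar
  · push Not at hbridge
    obtain ⟨x, hx, u, hu, hxu⟩ := hbridge
    exact exists_twoEdgeConnected_superpose_of_isPartialMatching hG hcard hS hind hx hu hxu hKH hK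
      (by rw [hKp, hSp])

end Existence

/-- Let `G` be connected, `H` nonempty without isolated vertices, `|V(H)| ≤ |V(G)|`.
Then there is an injective `φ : V(H) ↪ V(G)` such that `F = G ⊕_φ H` is edge
2-connected iff (1) `G` is edge 2-connected, or `G` is not edge 2-connected and
`p(G) ≤ |V(H)|`; and (2) it is not the case that `G` is isomorphic to a star
`K_{1,n}` with `n` odd and `H` is a matching graph. -/
theorem stmt16 {α β : Type*} [Fintype α] [Fintype β]
    (G : SimpleGraph α) (hG : G.Connected) (H : SimpleGraph β)
    (hne : Nonempty β)
    (hiso : ∀ x : β, ∃ y : β, H.Adj x y)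
    (hcard : Fintype.card β ≤ Fintype.card α) :
    (∃ φ : β ↪ α, TwoEdgeConnected (superpose G H φ)) ↔
      ((TwoEdgeConnected G ∨
          (¬ TwoEdgeConnected G ∧ numPendant G ≤ Fintype.card β)) ∧
        ¬ ((∃ n : ℕ, Odd n ∧
              Nonempty (G ≃g completeBipartiteGraph (Fin 1) (Fin n))) ∧
            IsMatchingGraph H)) := by
  have hα : Nonempty α := hG.nonempty
  rw [exists_odd_nonempty_iso_completeBipartiteGraph_iff, isMatchingGraph_iff hiso]
  constructor
  · rintro ⟨φ, hφ⟩
    refine ⟨(em (TwoEdgeConnected G)).imp_right fun hn ↦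
      ⟨hn, numPendant_le_card_of_twoEdgeConnected_superpose hG hφ⟩, ?_⟩
    rintro ⟨⟨heven, c, rfl⟩, hH⟩
    exact not_twoEdgeConnected_superpose_starGraph hiso hH heven hφ
  · rintro ⟨h | ⟨hn, hp⟩, hstar⟩
    · obtain ⟨φ⟩ := Function.Embedding.nonempty_of_card_le hcard
      refine ⟨φ, (twoEdgeConnected_superpose_iff hG).2 fun A u v hA ↦ ?_⟩
      exact absurd hA ((twoEdgeConnected_iff_forall_not_isBridgeCut hG).1 h A u v)
    · exact exists_twoEdgeConnected_superpose hG hiso hcard hn hp hstar
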